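/- The τ-function satisfies τ̃ = W_δ·τ, τ̂ = W_ε·τ, and τ̄ = W_λ·τ, where W_δ = 1 − sᵀ(χ_{δ,K′}(ξ))^{−1}C(1+MC)^{−1}r, and W_ε, W_λ are defined analogously with δ replaced by ε, λ. -/

import Mathlib

open scoped BigOperators

noncomputable section

/-- A period lattice in `ℂ` spanned by two `ℝ`-independent periods. -/
structure EllLattice where
  ω₁ : ℂ
  ω₂ : ℂ
  indep : ∀ a b : ℝ, a • ω₁ + b • ω₂ = 0 → a = 0 ∧ b = 0

namespace EllLattice

/-- Membership in the lattice `Λ = ℤω₁ + ℤω₂`. -/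
def mem (L : EllLattice) (z : ℂ) : Prop := ∃ m n : ℤ, z = m • L.ω₁ + n • L.ω₂

/-- The lattice point with integer coordinates `p = (m, n)`. -/
def per (L : EllLattice) (p : ℤ × ℤ) : ℂ := p.1 • L.ω₁ + p.2 • L.ω₂

/-- The Weierstrass sigma function associated to the lattice, defined by its
Hadamard product over the nonzero lattice points. -/
def sigma (L : EllLattice) (z : ℂ) : ℂ :=
  z * ∏' p : {p : ℤ × ℤ // p ≠ 0},
      ((1 - z / L.per p.1) *
        Complex.exp (z / L.per p.1 + z ^ 2 / (2 * (L.per p.1) ^ 2)))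

/-- The Weierstrass zeta function `ζ = σ′/σ`. -/
def zeta (L : EllLattice) (z : ℂ) : ℂ := deriv L.sigma z / L.sigma z

/-- The Weierstrass `℘`-function `℘ = −ζ′`. -/
def wp (L : EllLattice) (z : ℂ) : ℂ := - deriv L.zeta z

/-- `Φ_ξ(κ) = σ(ξ+κ)/(σ(ξ)σ(κ))`. -/
def Phi (L : EllLattice) (ξ κ : ℂ) : ℂ := L.sigma (ξ + κ) / (L.sigma ξ * L.sigma κ)

/-- The Lamé function `Ψ_ξ(κ) = Φ_ξ(κ)·e^{−ζ(ξ)κ}`. -/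
def Psi (L : EllLattice) (ξ κ : ℂ) : ℂ := L.Phi ξ κ * Complex.exp (-(L.zeta ξ) * κ)

/-- `η_δ(ξ) = ζ(ξ+δ) − ζ(ξ) − ζ(δ)`. -/
def eta (L : EllLattice) (δ ξ : ℂ) : ℂ := L.zeta (ξ + δ) - L.zeta ξ - L.zeta δ

/-- `χ_{α,β}(ξ) = ζ(α) + ζ(β) + ζ(ξ) − ζ(ξ+α+β)`. -/
def chi (L : EllLattice) (α β ξ : ℂ) : ℂ :=
  L.zeta α + L.zeta β + L.zeta ξ - L.zeta (ξ + α + β)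

end EllLattice

open Matrix

/-- All the data entering the elliptic (N,N′)-soliton solutions of the lattice KP system:
a period lattice, lattice parameters `δ, ε, λ`, a base point `ξ₀`, rapidity parameters
`κ_i, κ′_j`, initial plane-wave constants `ρ⁰_i, ν⁰_j` and a constant `N′×N` matrix `C`. -/
structure KPData (N N' : ℕ) where
  L : EllLattice
  del : ℂ
  eps : ℂ
  lam : ℂ
  xi0 : ℂ
  κ : Fin N → ℂ
  κ' : Fin N' → ℂ
  ρ0 : Fin N → ℂ
  ν0 : Fin N' → ℂ
  C : Matrix (Fin N') (Fin N) ℂ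

namespace KPData

variable {N N' : ℕ}

/-- `ξ = ξ₀ + nδ + mε + hλ`. -/
def xi (D : KPData N N') (n m h : ℤ) : ℂ :=
  D.xi0 + n • D.del + m • D.eps + h • D.lam

/-- The plane-wave factor `ρ_i(n,m,h)`. -/
def ρ (D : KPData N N') (i : Fin N) (n m h : ℤ) : ℂ :=
  (Complex.exp (-(D.L.zeta D.del) * D.κ i) * D.L.Psi D.del (-(D.κ i))) ^ n *
  (Complex.exp (-(D.L.zeta D.eps) * D.κ i) * D.L.Psi D.eps (-(D.κ i))) ^ m *
  (Complex.exp (-(D.L.zeta D.lam) * D.κ i) * D.L.Psi D.lam (-(D.κ i))) ^ h *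
  Complex.exp (D.L.zeta (D.xi n m h) * D.κ i) * D.ρ0 i

/-- The plane-wave factor `ν_j(n,m,h)`. -/
def ν (D : KPData N N') (j : Fin N') (n m h : ℤ) : ℂ :=
  (Complex.exp (D.L.zeta D.del * D.κ' j) * D.L.Psi D.del (D.κ' j)) ^ (-n) *
  (Complex.exp (D.L.zeta D.eps * D.κ' j) * D.L.Psi D.eps (D.κ' j)) ^ (-m) *
  (Complex.exp (D.L.zeta D.lam * D.κ' j) * D.L.Psi D.lam (D.κ' j)) ^ (-h) *
  Complex.exp (D.L.zeta (D.xi n m h) * D.κ' j) * D.ν0 j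

/-- The dressed elliptic Cauchy matrix `M_{ij} = ρ_i Ψ_ξ(κ_i + κ′_j) ν_j`. -/
def M (D : KPData N N') (n m h : ℤ) : Matrix (Fin N) (Fin N') ℂ :=
  Matrix.of fun i j => D.ρ i n m h * D.L.Psi (D.xi n m h) (D.κ i + D.κ' j) * D.ν j n m h

/-- The column vector `r = (ρ_i Ψ_ξ(κ_i))_i`. -/
def r (D : KPData N N') (n m h : ℤ) : Fin N → ℂ :=
  fun i => D.ρ i n m h * D.L.Psi (D.xi n m h) (D.κ i)

/-- The column vector `s = (ν_j Ψ_ξ(κ′_j))_j`. -/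
def s (D : KPData N N') (n m h : ℤ) : Fin N' → ℂ :=
  fun j => D.ν j n m h * D.L.Psi (D.xi n m h) (D.κ' j)

/-- The τ-function `τ = det(1 + MC)`. -/
def τ (D : KPData N N') (n m h : ℤ) : ℂ := (1 + D.M n m h * D.C).det

/-- The diagonal matrix `χ_{α,K}(ξ) = diag(χ_{α,κ_i}(ξ))`. -/
def DK (D : KPData N N') (α : ℂ) (n m h : ℤ) : Matrix (Fin N) (Fin N) ℂ :=
  Matrix.diagonal fun i => D.L.chi α (D.κ i) (D.xi n m h)

/-- The diagonal matrix `χ_{β,K′}(ξ) = diag(χ_{β,κ′_j}(ξ))`. -/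
def DK' (D : KPData N N') (β : ℂ) (n m h : ℤ) : Matrix (Fin N') (Fin N') ℂ :=
  Matrix.diagonal fun j => D.L.chi β (D.κ' j) (D.xi n m h)

/-- `W_β = 1 − sᵀ (χ_{β,K′}(ξ))⁻¹ C (1+MC)⁻¹ r`. -/
def W (D : KPData N N') (β : ℂ) (n m h : ℤ) : ℂ :=
  1 - D.s n m h ⬝ᵥ ((D.DK' β n m h)⁻¹ *ᵥ (D.C *ᵥ ((1 + D.M n m h * D.C)⁻¹ *ᵥ D.r n m h)))

/-- `V_α = 1 − sᵀ (1+CM)⁻¹ C (χ_{α,K}(ξ))⁻¹ r`. -/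
def V (D : KPData N N') (α : ℂ) (n m h : ℤ) : ℂ :=
  1 - D.s n m h ⬝ᵥ ((1 + D.C * D.M n m h)⁻¹ *ᵥ (D.C *ᵥ ((D.DK α n m h)⁻¹ *ᵥ D.r n m h)))

/-- `w₀ = sᵀ C (1+MC)⁻¹ r`. -/
def w0 (D : KPData N N') (n m h : ℤ) : ℂ :=
  D.s n m h ⬝ᵥ (D.C *ᵥ ((1 + D.M n m h * D.C)⁻¹ *ᵥ D.r n m h))

/-- `w = ζ(ξ) − w₀ − nζ(δ) − mζ(ε) − hζ(λ)`. -/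
def w (D : KPData N N') (n m h : ℤ) : ℂ :=
  D.L.zeta (D.xi n m h) - D.w0 n m h - n • D.L.zeta D.del - m • D.L.zeta D.eps -
    h • D.L.zeta D.lam

/-- `S_{β,α} = sᵀ (χ_{β,K′}(ξ))⁻¹ C (1+MC)⁻¹ (χ_{α,K}(ξ))⁻¹ r`. -/
def S (D : KPData N N') (β α : ℂ) (n m h : ℤ) : ℂ :=
  D.s n m h ⬝ᵥ ((D.DK' β n m h)⁻¹ *ᵥ
    (D.C *ᵥ ((1 + D.M n m h * D.C)⁻¹ *ᵥ ((D.DK α n m h)⁻¹ *ᵥ D.r n m h))))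

/-- `u_α = (1+MC)⁻¹ (χ_{α,K}(ξ))⁻¹ r`. -/
def u (D : KPData N N') (α : ℂ) (n m h : ℤ) : Fin N → ℂ :=
  (1 + D.M n m h * D.C)⁻¹ *ᵥ ((D.DK α n m h)⁻¹ *ᵥ D.r n m h)

/-- `u₀ = (1+MC)⁻¹ r`. -/
def u0 (D : KPData N N') (n m h : ℤ) : Fin N → ℂ :=
  (1 + D.M n m h * D.C)⁻¹ *ᵥ D.r n m h

/-- the adjoint (row) vector `ᵗu_β = sᵀ (χ_{β,K′}(ξ))⁻¹ (1+CM)⁻¹`. -/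
def tu (D : KPData N N') (β : ℂ) (n m h : ℤ) : Fin N' → ℂ :=
  (D.s n m h ᵥ* (D.DK' β n m h)⁻¹) ᵥ* (1 + D.C * D.M n m h)⁻¹

/-- the adjoint (row) vector `ᵗu₀ = sᵀ (1+CM)⁻¹`. -/
def tu0 (D : KPData N N') (n m h : ℤ) : Fin N' → ℂ :=
  D.s n m h ᵥ* (1 + D.C * D.M n m h)⁻¹

/-- The gauge variable `𝒱_α = Φ_ξ(α)·V_α`. -/
def calV (D : KPData N N') (α : ℂ) (n m h : ℤ) : ℂ :=
  D.L.Phi (D.xi n m h) α * D.V α n m h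

/-- The gauge variable `𝒲_β = Φ_ξ(β)·W_β`. -/
def calW (D : KPData N N') (β : ℂ) (n m h : ℤ) : ℂ :=
  D.L.Phi (D.xi n m h) β * D.W β n m h

/-- The Schwarzian variable `Z_{β,α} = Φ_ξ(α+β)·(1 − χ_{α,β}(ξ)·S_{β,α})`. -/
def Z (D : KPData N N') (β α : ℂ) (n m h : ℤ) : ℂ :=
  D.L.Phi (D.xi n m h) (α + β) * (1 - D.L.chi α β (D.xi n m h) * D.S β α n m h)

/-- Genericity of the parameters (together with finitely many auxiliary points `extra`):
no nontrivial integer combination of `ξ₀, δ, ε, λ`, the rapidity parameters and the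
auxiliary points lies on the lattice.  In particular all arguments of `σ` occurring in
the soliton solutions and their shifts lie outside `Λ`. -/
def Generic {P : ℕ} (D : KPData N N') (extra : Fin P → ℂ) : Prop :=
  ∀ (c0 cn cm ch : ℤ) (a : Fin N → ℤ) (b : Fin N' → ℤ) (e : Fin P → ℤ),
    ¬ (c0 = 0 ∧ cn = 0 ∧ cm = 0 ∧ ch = 0 ∧ a = 0 ∧ b = 0 ∧ e = 0) →
    ¬ D.L.mem (c0 • D.xi0 + cn • D.del + cm • D.eps + ch • D.lam +
      (∑ i, a i • D.κ i) + (∑ j, b j • D.κ' j) + ∑ t, e t • extra t)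

end KPData

/-!
A lattice step with parameter `β` subtracts from the dressed Cauchy matrix `M` the rank-one matrix
`r (sᵀ χ_{β,K′}(ξ)⁻¹)`, so the matrix determinant lemma gives the factor `W_β`. Entrywise, this
update is Fay's identity for `σ`, once `χ_{β,κ′}(ξ)` is written as a quotient of `σ`-values; that
quotient is the limit `κ → 0` of the same identity. Fay's identity is a substitution in the
three-term relation of `σ`, which Liouville's theorem yields: for generic parameters its left-hand
side and `σ(z+b)σ(z−b)` have the same quasi-periodicity factors and their quotient is entire. The
quasi-periodicity of `σ` comes from `ζ′ = −℘` and the periodicity of `℘`.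
-/

section ComplexAnalysis

open Filter Topology

theorem deriv_logDeriv {𝕜 : Type*} [NontriviallyNormedField 𝕜] [CompleteSpace 𝕜] {f : 𝕜 → 𝕜}
    {z : 𝕜} (hf : AnalyticAt 𝕜 f z) (hz : f z ≠ 0) :
    deriv (logDeriv f) z = (deriv (deriv f) z * f z - deriv f z * deriv f z) / f z ^ 2 :=
  deriv_div hf.deriv.differentiableAt hf.differentiableAt hz

theorem tendsto_deriv_logDeriv {ι : Type*} {p : Filter ι} {F : ι → ℂ → ℂ} {f : ℂ → ℂ} {s : Set ℂ}
    (hs : IsOpen s) {z : ℂ} (hzs : z ∈ s) (hF : TendstoLocallyUniformlyOn F f p s)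
    (hd : ∀ᶠ i in p, DifferentiableOn ℂ (F i) s) (hz : f z ≠ 0) :
    Tendsto (fun i => deriv (logDeriv (F i)) z) p (𝓝 (deriv (logDeriv f) z)) := by
  rcases p.eq_or_neBot with rfl | _
  · exact tendsto_bot
  have hF' := hF.deriv hd hs
  have hF'' := hF'.deriv (hd.mono fun _ h => h.deriv hs) hs
  have h₀ := hF.tendsto_at hzs
  have h₁ := hF'.tendsto_at hzs
  have h₂ := hF''.tendsto_at hzs
  have hfz : AnalyticAt ℂ f z := (hF.differentiableOn hd hs).analyticAt (hs.mem_nhds hzs)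
  rw [deriv_logDeriv hfz hz]
  refine (((h₂.mul h₀).sub (h₁.mul h₁)).div (h₀.pow 2) (pow_ne_zero 2 hz)).congr' ?_
  filter_upwards [hd, h₀.eventually_ne hz] with i hi hiz
  exact (deriv_logDeriv (hi.analyticAt (hs.mem_nhds hzs)) hiz).symm

theorem deriv_logDeriv_prod {ι 𝕜 : Type*} [NontriviallyNormedField 𝕜] [CompleteSpace 𝕜]
    {f : ι → 𝕜 → 𝕜} {s : Finset ι} {z : 𝕜} (hf : ∀ i ∈ s, AnalyticAt 𝕜 (f i) z)
    (hz : ∀ i ∈ s, f i z ≠ 0) :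
    deriv (logDeriv fun y => ∏ i ∈ s, f i y) z = ∑ i ∈ s, deriv (logDeriv (f i)) z := by
  have hnear : ∀ᶠ y in 𝓝 z, ∀ i ∈ s, f i y ≠ 0 ∧ DifferentiableAt 𝕜 (f i) y :=
    (Finset.eventually_all s).2 fun i hi =>
      ((hf i hi).continuousAt.eventually_ne (hz i hi)).and
        ((hf i hi).eventually_analyticAt.mono fun _ h => h.differentiableAt)
  have hlog : (logDeriv fun y => ∏ i ∈ s, f i y) =ᶠ[𝓝 z] fun y => ∑ i ∈ s, logDeriv (f i) y :=
    hnear.mono fun _ h => logDeriv_prod (fun i hi => (h i hi).1) fun i hi => (h i hi).2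
  rw [hlog.deriv_eq]
  exact deriv_fun_sum fun i hi =>
    (hf i hi).deriv.differentiableAt.div (hf i hi).differentiableAt (hz i hi)

theorem dense_ne_zero_of_deriv_ne_zero {𝕜 : Type*} [NontriviallyNormedField 𝕜] {g : 𝕜 → 𝕜}
    (h : ∀ z, g z = 0 → deriv g z ≠ 0) : Dense {z | g z ≠ 0} := by
  intro z
  by_cases hz : g z = 0
  · have hd : HasDerivAt g (deriv g z) z :=
      (differentiableAt_of_deriv_ne_zero (h z hz)).hasDerivAt
    exact mem_closure_iff_frequently.2
      (((hd.eventually_ne (h z hz) (c := 0)).frequently).filter_mono nhdsWithin_le_nhds)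
  · exact subset_closure hz

theorem eq_mul_dslope_of_eq_zero {𝕜 : Type*} [NontriviallyNormedField 𝕜] {f : 𝕜 → 𝕜} {a : 𝕜}
    (ha : f a = 0) (z : 𝕜) : f z = (z - a) * dslope f a z := by
  simpa [ha] using (sub_smul_dslope f a z).symm

theorem differentiable_dslope {f : ℂ → ℂ} (hf : Differentiable ℂ f) (a : ℂ) :
    Differentiable ℂ (dslope f a) :=
  differentiableOn_univ.1 <|
    (Complex.differentiableOn_dslope univ_mem).2 hf.differentiableOn

theorem exists_differentiable_mul_eq {F g : ℂ → ℂ} (hF : Differentiable ℂ F)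
    (hg : Differentiable ℂ g) (hF₀ : ∀ z, g z = 0 → F z = 0)
    (hg' : ∀ z, g z = 0 → deriv g z ≠ 0) :
    ∃ H : ℂ → ℂ, Differentiable ℂ H ∧ ∀ z, F z = H z * g z := by
  classical
  refine ⟨fun z => if g z = 0 then deriv F z / deriv g z else F z / g z, fun a => ?_, fun z => ?_⟩
  · by_cases ha : g a = 0
    · have hne : dslope g a a ≠ 0 := by rw [dslope_same]; exact hg' a ha
      have hdg := differentiable_dslope hg a a
      refine ((differentiable_dslope hF a a).div hdg hne).congr_of_eventuallyEq ?_
      filter_upwards [hdg.continuousAt.eventually_ne hne] with z hz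
      rcases eq_or_ne z a with rfl | hza
      · simp [ha, dslope_same]
      · rw [if_neg (by simp [eq_mul_dslope_of_eq_zero ha z, sub_ne_zero.2 hza, hz]),
          eq_mul_dslope_of_eq_zero (hF₀ a ha) z, eq_mul_dslope_of_eq_zero ha z,
          mul_div_mul_left _ _ (sub_ne_zero.2 hza), Pi.div_apply]
    · refine ((hF a).div (hg a) ha).congr_of_eventuallyEq ?_
      filter_upwards [(hg a).continuousAt.eventually_ne ha] with z hz using if_neg hz
  · by_cases hz : g z = 0
    · simp [hz, hF₀ z hz]
    · simp [hz]

end ComplexAnalysis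

section ElementaryFactor

/-- The Weierstrass elementary factor `E₂(t) = (1 - t) exp(t + t² / 2)`, of which the nontrivial
factors of the product defining `σ` are rescalings. -/
def elementaryFactor (t : ℂ) : ℂ := (1 - t) * Complex.exp (t + t ^ 2 / 2)

theorem hasDerivAt_elementaryFactor (t : ℂ) :
    HasDerivAt elementaryFactor (-t ^ 2 * Complex.exp (t + t ^ 2 / 2)) t := by
  have hexponent : HasDerivAt (fun t : ℂ => t + t ^ 2 / 2) (1 + t) t := by
    simpa using! (hasDerivAt_id t).add (((hasDerivAt_id t).pow 2).div_const 2)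
  convert! ((hasDerivAt_id t).const_sub 1).mul hexponent.cexp using 1
  simp only [id_eq]
  ring

theorem differentiable_elementaryFactor : Differentiable ℂ elementaryFactor :=
  fun t => (hasDerivAt_elementaryFactor t).differentiableAt

theorem elementaryFactor_eq_zero_iff {t : ℂ} : elementaryFactor t = 0 ↔ t = 1 := by
  simp [elementaryFactor, Complex.exp_ne_zero, sub_eq_zero, eq_comm (a := t)]

theorem norm_elementaryFactor_sub_one_le {t : ℂ} (ht : ‖t‖ ≤ 1) :
    ‖elementaryFactor t - 1‖ ≤ Real.exp 2 * ‖t‖ ^ 3 := by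
  have hderiv : ∀ x ∈ Metric.closedBall (0 : ℂ) ‖t‖,
      ‖-x ^ 2 * Complex.exp (x + x ^ 2 / 2)‖ ≤ Real.exp 2 * ‖t‖ ^ 2 := by
    intro x hx
    have hxt : ‖x‖ ≤ ‖t‖ := by simpa using hx
    have hexponent : ‖x + x ^ 2 / 2‖ ≤ 2 :=
      calc ‖x + x ^ 2 / 2‖ ≤ ‖x‖ + ‖x‖ ^ 2 / 2 :=
          (norm_add_le _ _).trans_eq (by rw [norm_div, norm_pow, Complex.norm_ofNat])
        _ ≤ 2 := by nlinarith [norm_nonneg x]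
    rw [norm_mul, norm_neg, norm_pow, mul_comm]
    gcongr
    exact (Complex.norm_exp_le_exp_norm _).trans (Real.exp_le_exp.2 hexponent)
  have hmean := (convex_closedBall (0 : ℂ) ‖t‖).norm_image_sub_le_of_norm_hasDerivWithin_le
    (fun x _ => (hasDerivAt_elementaryFactor x).hasDerivWithinAt) hderiv
    (x := 0) (y := t) (by simp) (by simp)
  simpa [elementaryFactor, pow_succ, mul_assoc] using hmean

theorem logDeriv_elementaryFactor (t : ℂ) : logDeriv elementaryFactor t = -t ^ 2 / (1 - t) := by
  rw [logDeriv_apply, (hasDerivAt_elementaryFactor t).deriv, elementaryFactor,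
    mul_div_mul_right _ _ (Complex.exp_ne_zero _)]

theorem deriv_logDeriv_elementaryFactor_div {w z : ℂ} (hw : w ≠ 0) (hzw : z ≠ w) :
    deriv (logDeriv fun y => elementaryFactor (y / w)) z = 1 / w ^ 2 - 1 / (z - w) ^ 2 := by
  have hlog : (logDeriv fun y => elementaryFactor (y / w)) = fun y => y ^ 2 / (y - w) / w ^ 2 := by
    ext y
    have hcomp := logDeriv_comp (x := y) (g := fun y => y / w)
      (differentiable_elementaryFactor (y / w)) (differentiableAt_id.div_const w)
    rw [logDeriv_elementaryFactor, deriv_div_const, deriv_id'', one_sub_div hw] at hcomp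
    refine hcomp.trans ?_
    rw [← neg_sub y w]
    field_simp
  have hzw' : z - w ≠ 0 := sub_ne_zero.2 hzw
  have hquot : HasDerivAt (fun y => y ^ 2 / (y - w) / w ^ 2) _ z :=
    ((((hasDerivAt_id z).pow 2)).div ((hasDerivAt_id z).sub_const w) hzw').div_const (w ^ 2)
  rw [hlog, hquot.deriv]
  simp only [id_eq, Pi.pow_apply]
  field_simp
  ring

end ElementaryFactor

namespace EllLattice

open Filter Topology

variable (L : EllLattice)

/-- The same periods as a Mathlib `PeriodPair`, which gives access to its `℘`-function. -/
def toPeriodPair : PeriodPair where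
  ω₁ := L.ω₁
  ω₂ := L.ω₂
  indep := LinearIndependent.pair_iff.2 L.indep

/-- The lattice `Λ = ℤω₁ + ℤω₂` as a subgroup of `ℂ`. -/
abbrev lattice : Submodule ℤ ℂ := L.toPeriodPair.lattice

theorem mem_iff_mem_lattice {z : ℂ} : L.mem z ↔ z ∈ L.lattice := by
  simp only [mem, lattice, PeriodPair.mem_lattice, toPeriodPair, zsmul_eq_mul, eq_comm (a := z)]

theorem countable_lattice : (L.lattice : Set ℂ).Countable :=
  (Set.countable_range L.per).mono fun z hz => by
    obtain ⟨m, n, rfl⟩ := L.mem_iff_mem_lattice.2 hz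
    exact ⟨(m, n), rfl⟩

theorem coe_latticeEquivProd_symm (p : ℤ × ℤ) :
    (L.toPeriodPair.latticeEquivProd.symm p : ℂ) = L.per p := by
  rw [PeriodPair.latticeEquiv_symm_apply]
  simp only [toPeriodPair, per, zsmul_eq_mul]

theorem per_mem_lattice (p : ℤ × ℤ) : L.per p ∈ L.lattice :=
  L.coe_latticeEquivProd_symm p ▸ Subtype.coe_prop _

theorem per_ne_zero {p : ℤ × ℤ} (hp : p ≠ 0) : L.per p ≠ 0 := by
  simpa [← coe_latticeEquivProd_symm] using hp

theorem summable_inv_norm_per_pow_three :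
    Summable fun p : {p : ℤ × ℤ // p ≠ 0} => (‖L.per p‖ ^ 3)⁻¹ := by
  have h := ZLattice.summable_norm_rpow L.lattice (-3) (by simp; norm_num)
  refine (h.comp_injective (L.toPeriodPair.latticeEquivProd.symm.injective.comp
    Subtype.val_injective)).congr fun p => ?_
  rw [Function.comp_apply, Function.comp_apply, ← coe_latticeEquivProd_symm,
    Real.rpow_neg (norm_nonneg _)]
  norm_cast

/-- The product part of `σ`, so that `σ(z) = z * sigmaProd z`. -/
def sigmaProd (z : ℂ) : ℂ :=
  ∏' p : {p : ℤ × ℤ // p ≠ 0}, elementaryFactor (z / L.per p)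

theorem sigma_eq_mul_sigmaProd (z : ℂ) : L.sigma z = z * L.sigmaProd z := by
  simp only [sigma, sigmaProd, elementaryFactor, div_pow, div_div, mul_comm (2 : ℂ)]

theorem eventually_norm_elementaryFactor_sub_one_le (R : ℝ) :
    ∀ᶠ p : {p : ℤ × ℤ // p ≠ 0} in cofinite, ∀ z : ℂ, ‖z‖ ≤ R →
      ‖elementaryFactor (z / L.per p) - 1‖ ≤ Real.exp 2 * R ^ 3 * (‖L.per p‖ ^ 3)⁻¹ := by
  have hsmall := (L.summable_inv_norm_per_pow_three.mul_left (R ^ 3)).tendsto_cofinite_zero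
  filter_upwards [hsmall.eventually_le_const one_pos] with p hp z hz
  have : 0 ≤ R := (norm_nonneg z).trans hz
  have hpow : ‖z / L.per p‖ ^ 3 ≤ R ^ 3 * (‖L.per p‖ ^ 3)⁻¹ := by
    rw [norm_div, div_pow, div_eq_mul_inv]
    gcongr
  have hle : ‖z / L.per p‖ ≤ 1 := (pow_le_one_iff_of_nonneg (norm_nonneg _) three_ne_zero).1
    (hpow.trans hp)
  calc ‖elementaryFactor (z / L.per p) - 1‖ ≤ Real.exp 2 * ‖z / L.per p‖ ^ 3 :=
        norm_elementaryFactor_sub_one_le hle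
    _ ≤ Real.exp 2 * R ^ 3 * (‖L.per p‖ ^ 3)⁻¹ := by rw [mul_assoc]; gcongr

theorem differentiable_elementaryFactor_div (w : ℂ) :
    Differentiable ℂ fun z => elementaryFactor (z / w) :=
  differentiable_elementaryFactor.comp (differentiable_id.div_const w)

theorem tendstoLocallyUniformlyOn_sigmaProd :
    TendstoLocallyUniformlyOn (fun (s : Finset {p : ℤ × ℤ // p ≠ 0}) (z : ℂ) =>
      ∏ p ∈ s, elementaryFactor (z / L.per p)) L.sigmaProd atTop Set.univ := by
  rw [tendstoLocallyUniformlyOn_iff_forall_isCompact isOpen_univ]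
  intro K _ hK
  obtain ⟨R, hR⟩ := hK.isBounded.exists_norm_le
  have hprod := Summable.hasProdUniformlyOn_one_add hK
    (f := fun (p : {p : ℤ × ℤ // p ≠ 0}) z => elementaryFactor (z / L.per p) - 1)
    (L.summable_inv_norm_per_pow_three.mul_left (Real.exp 2 * R ^ 3))
    ((L.eventually_norm_elementaryFactor_sub_one_le R).mono fun p hp z hz => hp z (hR z hz))
    (fun p => ((differentiable_elementaryFactor_div _).continuous.sub
      continuous_const).continuousOn)
  simpa [sigmaProd] using! hasProdUniformlyOn_iff_tendstoUniformlyOn.1 hprod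

theorem differentiable_sigmaProd : Differentiable ℂ L.sigmaProd :=
  differentiableOn_univ.1 <| L.tendstoLocallyUniformlyOn_sigmaProd.differentiableOn
    (.of_forall fun _ => (Differentiable.fun_finsetProd fun _ _ =>
      differentiable_elementaryFactor_div _).differentiableOn) isOpen_univ

theorem elementaryFactor_div_per_ne_zero {z : ℂ} (hz : z ∉ L.lattice)
    (p : {p : ℤ × ℤ // p ≠ 0}) : elementaryFactor (z / L.per p) ≠ 0 := by
  rw [Ne, elementaryFactor_eq_zero_iff, div_eq_one_iff_eq (L.per_ne_zero p.2)]
  rintro rfl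
  exact hz (L.per_mem_lattice p)

theorem sigmaProd_ne_zero {z : ℂ} (hz : z ∉ L.lattice) : L.sigmaProd z ≠ 0 := by
  have hsum : Summable fun p : {p : ℤ × ℤ // p ≠ 0} => ‖elementaryFactor (z / L.per p) - 1‖ := by
    refine Summable.of_norm_bounded_eventually
      (L.summable_inv_norm_per_pow_three.mul_left (Real.exp 2 * ‖z‖ ^ 3)) ?_
    filter_upwards [L.eventually_norm_elementaryFactor_sub_one_le ‖z‖] with p hp
    simpa using hp z le_rfl
  simpa [sigmaProd] using! tprod_one_add_ne_zero_of_summable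
    (fun p => by simpa using L.elementaryFactor_div_per_ne_zero hz p) hsum

theorem sigmaProd_neg (z : ℂ) : L.sigmaProd (-z) = L.sigmaProd z := by
  let negEquiv : {p : ℤ × ℤ // p ≠ 0} ≃ {p : ℤ × ℤ // p ≠ 0} :=
    (Equiv.neg (ℤ × ℤ)).subtypeEquiv fun p => by simp
  have hper : ∀ p, L.per (negEquiv p) = -L.per p := fun p => by
    simp [negEquiv, per, add_comm]
  simp only [sigmaProd, ← negEquiv.tprod_eq fun p => elementaryFactor (-z / L.per p), hper,
    neg_div_neg_eq]

theorem differentiable_sigma : Differentiable ℂ L.sigma := by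
  rw [funext L.sigma_eq_mul_sigmaProd]
  exact differentiable_id.mul L.differentiable_sigmaProd

theorem sigma_zero : L.sigma 0 = 0 := by simp [sigma_eq_mul_sigmaProd]

theorem sigma_neg (z : ℂ) : L.sigma (-z) = -L.sigma z := by
  simp [sigma_eq_mul_sigmaProd, sigmaProd_neg]

theorem deriv_sigma_zero : deriv L.sigma 0 = 1 := by
  have h := (hasDerivAt_id' (0 : ℂ)).fun_mul (L.differentiable_sigmaProd 0).hasDerivAt
  rw [funext L.sigma_eq_mul_sigmaProd, h.deriv]
  simp [sigmaProd, elementaryFactor]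

theorem sigma_ne_zero {z : ℂ} (hz : z ∉ L.lattice) : L.sigma z ≠ 0 := by
  rw [sigma_eq_mul_sigmaProd]
  refine mul_ne_zero ?_ (L.sigmaProd_ne_zero hz)
  rintro rfl
  exact hz L.lattice.zero_mem

theorem hasSum_weierstrassP_sub_inv_sq (z : ℂ) :
    HasSum (fun p : {p : ℤ × ℤ // p ≠ 0} => 1 / (z - L.per p) ^ 2 - 1 / L.per p ^ 2)
      (L.toPeriodPair.weierstrassP z - 1 / z ^ 2) := by
  have hsum : HasSum (fun p => 1 / (z - L.per p) ^ 2 - 1 / L.per p ^ 2)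
      (L.toPeriodPair.weierstrassP z) := by
    have h := L.toPeriodPair.latticeEquivProd.symm.toEquiv.hasSum_iff.2
      (L.toPeriodPair.hasSum_weierstrassP z)
    simpa only [Function.comp_def, LinearEquiv.coe_toEquiv, coe_latticeEquivProd_symm] using h
  have hindicator : {p : ℤ × ℤ | p ≠ 0}.indicator
      (fun p => 1 / (z - L.per p) ^ 2 - 1 / L.per p ^ 2) = fun p =>
      1 / (z - L.per p) ^ 2 - 1 / L.per p ^ 2 - (Pi.single 0 (1 / z ^ 2) : ℤ × ℤ → ℂ) p := by
    ext p
    by_cases hp : p = 0 <;> simp [hp, per]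
  refine (hasSum_subtype_iff_indicator (s := {p : ℤ × ℤ | p ≠ 0})
    (f := fun p => 1 / (z - L.per p) ^ 2 - 1 / L.per p ^ 2)).2 ?_
  rw [hindicator]
  exact hsum.sub (hasSum_pi_single 0 (1 / z ^ 2))

theorem deriv_logDeriv_sigmaProd {z : ℂ} (hz : z ∉ L.lattice) :
    deriv (logDeriv L.sigmaProd) z = 1 / z ^ 2 - L.toPeriodPair.weierstrassP z := by
  have hlim := tendsto_deriv_logDeriv isOpen_univ (Set.mem_univ z)
    L.tendstoLocallyUniformlyOn_sigmaProd (.of_forall fun _ => (Differentiable.fun_finsetProd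
      fun _ _ => differentiable_elementaryFactor_div _).differentiableOn) (L.sigmaProd_ne_zero hz)
  refine tendsto_nhds_unique hlim ?_
  rw [← neg_sub]
  refine (L.hasSum_weierstrassP_sub_inv_sq z).neg.congr fun s => ?_
  rw [deriv_logDeriv_prod (fun p _ => (differentiable_elementaryFactor_div _).analyticAt z)
    fun p _ => L.elementaryFactor_div_per_ne_zero hz p]
  refine Finset.sum_congr rfl fun p _ => ?_
  have hzp : z ≠ L.per p := fun h => hz (h ▸ L.per_mem_lattice p)
  rw [deriv_logDeriv_elementaryFactor_div (L.per_ne_zero p.2) hzp]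
  exact neg_sub _ _

theorem differentiableAt_zeta {z : ℂ} (hz : z ∉ L.lattice) : DifferentiableAt ℂ L.zeta z :=
  (L.differentiable_sigma.analyticAt z).deriv.differentiableAt.div (L.differentiable_sigma z)
    (L.sigma_ne_zero hz)

theorem deriv_zeta {z : ℂ} (hz : z ∉ L.lattice) :
    deriv L.zeta z = -L.toPeriodPair.weierstrassP z := by
  have hne : ∀ {y : ℂ}, y ∉ L.lattice → y ≠ 0 := fun hy h => hy (h ▸ L.lattice.zero_mem)
  have hzeta : L.zeta =ᶠ[𝓝 z] fun y => y⁻¹ + logDeriv L.sigmaProd y := by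
    filter_upwards [L.toPeriodPair.isClosed_lattice.isOpen_compl.mem_nhds hz]
      with y (hy : y ∉ L.lattice)
    have hlog := logDeriv_mul y (hne hy) (L.sigmaProd_ne_zero hy) differentiableAt_id
      (L.differentiable_sigmaProd y)
    simpa [← sigma_eq_mul_sigmaProd, logDeriv_apply, zeta] using hlog
  have hdiff : DifferentiableAt ℂ (logDeriv L.sigmaProd) z :=
    (L.differentiable_sigmaProd.analyticAt z).deriv.differentiableAt.div
      (L.differentiable_sigmaProd z) (L.sigmaProd_ne_zero hz)
  rw [hzeta.deriv_eq, deriv_fun_add (differentiableAt_inv (hne hz)) hdiff, deriv_inv,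
    L.deriv_logDeriv_sigmaProd hz]
  ring

theorem isPreconnected_compl_lattice : IsPreconnected (L.lattice : Set ℂ)ᶜ :=
  (L.countable_lattice.isPathConnected_compl_of_one_lt_rank (by simp)).isConnected.isPreconnected

theorem dense_compl_lattice : Dense (L.lattice : Set ℂ)ᶜ := L.countable_lattice.dense_compl ℝ

theorem exists_zeta_add_period {w : ℂ} (hw : w ∈ L.lattice) :
    ∃ η : ℂ, ∀ z ∉ L.lattice, L.zeta (z + w) = L.zeta z + η := by
  have hadd : ∀ {z : ℂ}, z ∉ L.lattice → z + w ∉ L.lattice :=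
    fun hz => mt (L.lattice.add_mem_iff_left hw).1 hz
  have hd : ∀ z ∉ L.lattice, DifferentiableAt ℂ (fun y => L.zeta (y + w)) z := fun z hz =>
    differentiableAt_comp_add_const.2 (L.differentiableAt_zeta (hadd hz))
  have hderiv : ∀ z ∉ L.lattice, deriv (fun y => L.zeta (y + w) - L.zeta y) z = 0 := by
    intro z hz
    rw [deriv_fun_sub (hd z hz) (L.differentiableAt_zeta hz), deriv_comp_add_const,
      L.deriv_zeta (hadd hz), L.deriv_zeta hz]
    exact sub_eq_zero.2 (congrArg Neg.neg (L.toPeriodPair.weierstrassP_add_coe z ⟨w, hw⟩))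
  obtain ⟨η, hη⟩ := L.toPeriodPair.isClosed_lattice.isOpen_compl.exists_is_const_of_deriv_eq_zero
    L.isPreconnected_compl_lattice
    (fun z hz => ((hd z hz).sub (L.differentiableAt_zeta hz)).differentiableWithinAt) hderiv
  exact ⟨η, fun z hz => sub_eq_iff_eq_add'.1 (hη z hz)⟩

theorem exists_sigma_add_period {w : ℂ} (hw : w ∈ L.lattice) :
    ∃ c η : ℂ, c ≠ 0 ∧ ∀ z, L.sigma (z + w) = c * Complex.exp (η * z) * L.sigma z := by
  obtain ⟨η, hη⟩ := L.exists_zeta_add_period hw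
  have hshift : Differentiable ℂ fun z => L.sigma (z + w) :=
    L.differentiable_sigma.comp (differentiable_id.add_const w)
  have hexp : Differentiable ℂ fun z => Complex.exp (η * z) := by fun_prop
  have hlog : Set.EqOn (logDeriv fun z => L.sigma (z + w))
      (logDeriv fun z => Complex.exp (η * z) * L.sigma z) (L.lattice : Set ℂ)ᶜ := by
    intro z (hz : z ∉ L.lattice)
    have hlogexp : logDeriv (fun z => Complex.exp (η * z)) z = η := by
      rw [logDeriv_apply, ((hasDerivAt_id' z).const_mul η).cexp.deriv, mul_one,
        mul_div_cancel_left₀ _ (Complex.exp_ne_zero _)]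
    rw [logDeriv_mul (f := fun z => Complex.exp (η * z)) z (Complex.exp_ne_zero _)
      (L.sigma_ne_zero hz) (hexp z) (L.differentiable_sigma z), hlogexp, add_comm, logDeriv_apply,
      deriv_comp_add_const]
    exact hη z hz
  obtain ⟨c, hc, heq⟩ := (logDeriv_eqOn_iff hshift.differentiableOn
    (hexp.mul L.differentiable_sigma).differentiableOn
    L.toPeriodPair.isClosed_lattice.isOpen_compl L.isPreconnected_compl_lattice
    (fun z hz => mul_ne_zero (Complex.exp_ne_zero _) (L.sigma_ne_zero hz))
    (fun z hz => L.sigma_ne_zero (mt (L.lattice.add_mem_iff_left hw).1 hz))).1 hlog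
  have heverywhere := Continuous.ext_on L.dense_compl_lattice hshift.continuous
    ((hexp.mul L.differentiable_sigma).continuous.const_smul c) heq
  exact ⟨c, η, hc, fun z => by simpa [mul_assoc] using congrFun heverywhere z⟩

theorem sigma_eq_zero_iff {z : ℂ} : L.sigma z = 0 ↔ z ∈ L.lattice := by
  refine ⟨not_imp_not.1 L.sigma_ne_zero, fun hz => ?_⟩
  obtain ⟨c, η, -, h⟩ := L.exists_sigma_add_period hz
  simpa [sigma_zero] using h 0

theorem deriv_sigma_ne_zero {w : ℂ} (hw : w ∈ L.lattice) : deriv L.sigma w ≠ 0 := by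
  obtain ⟨c, η, hc, h⟩ := L.exists_sigma_add_period hw
  have hexp : DifferentiableAt ℂ (fun z => c * Complex.exp (η * z)) 0 := by fun_prop
  have hderiv := deriv_fun_mul hexp (L.differentiable_sigma 0)
  rw [← funext h, deriv_comp_add_const, zero_add, sigma_zero, deriv_sigma_zero] at hderiv
  simpa [hderiv] using hc

theorem exists_eq_const_mul_of_common_multiplier {F g : ℂ → ℂ} (hF : Differentiable ℂ F)
    (hg : Differentiable ℂ g)
    (hmul : ∀ w ∈ L.lattice, ∃ m : ℂ → ℂ, ∀ z, F (z + w) = m z * F z ∧ g (z + w) = m z * g z)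
    (hF₀ : ∀ z, g z = 0 → F z = 0) (hg' : ∀ z, g z = 0 → deriv g z ≠ 0) :
    ∃ k : ℂ, ∀ z, F z = k * g z := by
  obtain ⟨H, hH, hFH⟩ := exists_differentiable_mul_eq hF hg hF₀ hg'
  have hper : ∀ z w, w ∈ L.lattice → H (z + w) = H z := by
    intro z w hw
    obtain ⟨m, hm⟩ := hmul w hw
    have hdense : Dense {y | g (y + w) ≠ 0} :=
      (dense_ne_zero_of_deriv_ne_zero hg').preimage (Homeomorph.addRight w).isOpenMap
    have heq : Set.EqOn (fun y => H (y + w)) H {y | g (y + w) ≠ 0} := fun y hy => by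
      refine mul_right_cancel₀ hy ?_
      calc H (y + w) * g (y + w) = m y * (H y * g y) := by rw [← hFH, (hm y).1, hFH]
        _ = H y * g (y + w) := by rw [(hm y).2, mul_left_comm]
    exact congrFun (Continuous.ext_on hdense
      (hH.continuous.comp (continuous_add_const w)) hH.continuous heq) z
  have hbdd := (IsZLattice.isCompact_range_of_periodic L.lattice H hH.continuous hper).isBounded
  exact ⟨H 0, fun z => by rw [hFH, hH.apply_eq_apply_of_bounded hbdd z 0]⟩

/-- The product `σ(z+t)σ(z−t)`, a multiple of `℘(t) − ℘(z)`; its quasi-periodicity factor in `z`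
does not depend on `t`. -/
def sigmaPair (t z : ℂ) : ℂ := L.sigma (z + t) * L.sigma (z - t)

theorem sigmaPair_swap (t z : ℂ) : L.sigmaPair t z = -L.sigmaPair z t := by
  rw [sigmaPair, sigmaPair, add_comm, ← neg_sub t z, sigma_neg, mul_neg]

theorem sigmaPair_self (t : ℂ) : L.sigmaPair t t = 0 := by
  rw [sigmaPair, sub_self, sigma_zero, mul_zero]

theorem sigmaPair_neg (t z : ℂ) : L.sigmaPair t (-z) = L.sigmaPair t z := by
  have hsub : -z + t = -(z - t) := by ring
  have hadd : -z - t = -(z + t) := by ring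
  rw [sigmaPair, sigmaPair, hsub, hadd, sigma_neg, sigma_neg]
  ring

theorem sigmaPair_eq_zero_iff {t z : ℂ} :
    L.sigmaPair t z = 0 ↔ z + t ∈ L.lattice ∨ z - t ∈ L.lattice := by
  rw [sigmaPair, mul_eq_zero, sigma_eq_zero_iff, sigma_eq_zero_iff]

theorem differentiable_sigmaPair (t : ℂ) : Differentiable ℂ (L.sigmaPair t) :=
  (L.differentiable_sigma.comp (differentiable_id.add_const t)).mul
    (L.differentiable_sigma.comp (differentiable_id.sub_const t))

theorem exists_sigmaPair_add_period {w : ℂ} (hw : w ∈ L.lattice) :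
    ∃ m : ℂ → ℂ, ∀ t z, L.sigmaPair t (z + w) = m z * L.sigmaPair t z := by
  obtain ⟨c, η, -, h⟩ := L.exists_sigma_add_period hw
  refine ⟨fun z => c ^ 2 * Complex.exp (2 * η * z), fun t z => ?_⟩
  have hexp : Complex.exp (2 * η * z) = Complex.exp (η * (z + t)) * Complex.exp (η * (z - t)) := by
    rw [← Complex.exp_add]
    ring_nf
  beta_reduce
  rw [sigmaPair, sigmaPair, add_right_comm, add_sub_right_comm, h, h, hexp]
  ring

theorem deriv_sigmaPair_ne_zero {t z : ℂ} (ht : 2 * t ∉ L.lattice) (hz : L.sigmaPair t z = 0) :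
    deriv (L.sigmaPair t) z ≠ 0 := by
  have hderiv : deriv (L.sigmaPair t) z =
      deriv L.sigma (z + t) * L.sigma (z - t) + L.sigma (z + t) * deriv L.sigma (z - t) :=
    (((L.differentiable_sigma _).hasDerivAt.comp_add_const z t).mul
      ((L.differentiable_sigma _).hasDerivAt.comp_sub_const z t)).deriv
  have hdiff : z + t - (z - t) = 2 * t := by ring
  rw [hderiv]
  rcases L.sigmaPair_eq_zero_iff.1 hz with hadd | hsub
  · have hsub : z - t ∉ L.lattice := fun h => ht (hdiff ▸ L.lattice.sub_mem hadd h)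
    rw [L.sigma_eq_zero_iff.2 hadd, zero_mul, add_zero]
    exact mul_ne_zero (L.deriv_sigma_ne_zero hadd) (L.sigma_ne_zero hsub)
  · have hadd : z + t ∉ L.lattice := fun h => ht (hdiff ▸ L.lattice.sub_mem h hsub)
    rw [L.sigma_eq_zero_iff.2 hsub, mul_zero, zero_add]
    exact mul_ne_zero (L.sigma_ne_zero hadd) (L.deriv_sigma_ne_zero hsub)

theorem sigmaPair_three_term_of_notMem {b c : ℂ} (hb : 2 * b ∉ L.lattice)
    (hbc : L.sigmaPair b c ≠ 0) (a d : ℂ) :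
    L.sigmaPair b a * L.sigmaPair d c + L.sigmaPair c b * L.sigmaPair d a +
      L.sigmaPair a c * L.sigmaPair d b = 0 := by
  let F : ℂ → ℂ := fun z => L.sigmaPair b z * L.sigmaPair d c + L.sigmaPair c b * L.sigmaPair d z -
    L.sigmaPair c z * L.sigmaPair d b
  have hFdef (z : ℂ) : F z = L.sigmaPair b z * L.sigmaPair d c +
    L.sigmaPair c b * L.sigmaPair d z - L.sigmaPair c z * L.sigmaPair d b := rfl
  have hF : Differentiable ℂ F := (((L.differentiable_sigmaPair b).mul_const _).add
    ((L.differentiable_sigmaPair d).const_mul _)).sub ((L.differentiable_sigmaPair c).mul_const _)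
  have hmul : ∀ w ∈ L.lattice, ∃ m : ℂ → ℂ, ∀ z,
      F (z + w) = m z * F z ∧ L.sigmaPair b (z + w) = m z * L.sigmaPair b z := by
    intro w hw
    obtain ⟨m, hm⟩ := L.exists_sigmaPair_add_period hw
    refine ⟨m, fun z => ⟨?_, hm b z⟩⟩
    simp only [hFdef, hm]
    ring
  have hFb : F b = 0 := by rw [hFdef, sigmaPair_self]; ring
  have hFneg : F (-b) = 0 := by simpa only [hFdef, sigmaPair_neg] using hFb
  have hzero : ∀ z, L.sigmaPair b z = 0 → F z = 0 := by
    intro z hz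
    rcases L.sigmaPair_eq_zero_iff.1 hz with h | h
    · obtain ⟨m, hm⟩ := hmul _ h
      simpa [hFneg] using (hm (-b)).1
    · obtain ⟨m, hm⟩ := hmul _ h
      simpa [hFb] using (hm b).1
  obtain ⟨k, hk⟩ := L.exists_eq_const_mul_of_common_multiplier hF (L.differentiable_sigmaPair b)
    hmul hzero fun z => L.deriv_sigmaPair_ne_zero hb
  have hFc : F c = 0 := by rw [hFdef, sigmaPair_self, L.sigmaPair_swap c b]; ring
  have hk₀ : k = 0 := (mul_eq_zero.1 ((hk c).symm.trans hFc)).resolve_right hbc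
  have hFa : F a = 0 := by rw [hk, hk₀, zero_mul]
  rw [L.sigmaPair_swap a c, ← hFa, hFdef]
  ring

theorem sigmaPair_three_term (a b c d : ℂ) :
    L.sigmaPair b a * L.sigmaPair d c + L.sigmaPair c b * L.sigmaPair d a +
      L.sigmaPair a c * L.sigmaPair d b = 0 := by
  have hcountable : {b : ℂ | 2 * b ∈ L.lattice ∨ L.sigmaPair c b = 0}.Countable := by
    simp only [sigmaPair_eq_zero_iff]
    exact (L.countable_lattice.preimage (mul_right_injective₀ two_ne_zero)).union
      ((L.countable_lattice.preimage (add_left_injective c)).union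
        (L.countable_lattice.preimage (sub_left_injective (b := c))))
  have hcont (t : ℂ) : Continuous (L.sigmaPair t) := (L.differentiable_sigmaPair t).continuous
  have heq : Set.EqOn (fun b => -L.sigmaPair a b * L.sigmaPair d c + L.sigmaPair c b *
      L.sigmaPair d a + L.sigmaPair a c * L.sigmaPair d b) (fun _ => 0)
      {b : ℂ | 2 * b ∈ L.lattice ∨ L.sigmaPair c b = 0}ᶜ := fun b hb => by
    have hb' := not_or.1 hb
    simp only [← L.sigmaPair_swap b a]
    exact L.sigmaPair_three_term_of_notMem hb'.1
      (by rw [sigmaPair_swap]; exact neg_ne_zero.2 hb'.2) a d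
  rw [L.sigmaPair_swap b a]
  exact congrFun (Continuous.ext_on (hcountable.dense_compl ℝ) (by fun_prop) (by fun_prop) heq) b

theorem sigmaPair_eq_mul {t z x y : ℂ} (hx : z + t = x) (hy : z - t = y) :
    L.sigmaPair t z = L.sigma x * L.sigma y := by
  rw [sigmaPair, hx, hy]

theorem sigma_fay (ξ δ κ κ' : ℂ) :
    L.sigma (ξ + κ + κ') * L.sigma (δ + κ') * L.sigma κ * L.sigma (ξ + δ) =
      L.sigma (ξ + κ) * L.sigma (ξ + δ + κ') * L.sigma (κ + κ') * L.sigma δ -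
      L.sigma (ξ + δ + κ + κ') * L.sigma (δ - κ) * L.sigma ξ * L.sigma κ' := by
  have h := L.sigmaPair_three_term ((ξ + δ + κ) / 2 + κ') ((ξ + κ - δ) / 2) ((ξ + δ + κ) / 2)
    ((ξ + δ - κ) / 2)
  rw [L.sigmaPair_eq_mul (x := ξ + κ + κ') (y := δ + κ') (by ring) (by ring),
    L.sigmaPair_eq_mul (x := ξ + δ) (y := κ) (by ring) (by ring),
    L.sigmaPair_eq_mul (x := ξ + κ) (y := -δ) (by ring) (by ring),
    L.sigmaPair_eq_mul (x := ξ + δ + κ') (y := κ + κ') (by ring) (by ring),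
    L.sigmaPair_eq_mul (x := ξ + δ + κ + κ') (y := -κ') (by ring) (by ring),
    L.sigmaPair_eq_mul (x := ξ) (y := -(δ - κ)) (by ring) (by ring),
    sigma_neg, sigma_neg, sigma_neg] at h
  linear_combination h

theorem chi_mul_sigma {δ κ' ξ : ℂ} (hδ : δ ∉ L.lattice) (hκ' : κ' ∉ L.lattice)
    (hξ : ξ ∉ L.lattice) (hsum : ξ + δ + κ' ∉ L.lattice) :
    L.chi δ κ' ξ * (L.sigma δ * L.sigma κ' * L.sigma ξ * L.sigma (ξ + δ + κ')) =
      L.sigma (δ + κ') * L.sigma (ξ + κ') * L.sigma (ξ + δ) := by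
  -- Both sides are the `κ`-derivatives at `κ = 0` in `sigma_fay`.
  have hadd (x : ℂ) : HasDerivAt (fun κ => L.sigma (x + κ)) (deriv L.sigma x) 0 := by
    simpa using (L.differentiable_sigma (x + 0)).hasDerivAt.comp_const_add x 0
  have hsub : HasDerivAt (fun κ => L.sigma (δ - κ)) (-deriv L.sigma δ) 0 := by
    simpa using (L.differentiable_sigma (δ - 0)).hasDerivAt.comp_const_sub δ 0
  have hσ : HasDerivAt L.sigma 1 0 := by
    simpa [deriv_sigma_zero] using (L.differentiable_sigma 0).hasDerivAt
  have hleft := (((hadd (ξ + κ')).mul_const (L.sigma (δ + κ'))).mul hσ).mul_const (L.sigma (ξ + δ))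
  have hright := ((((hadd ξ).mul_const (L.sigma (ξ + δ + κ'))).mul (hadd κ')).mul_const
    (L.sigma δ)).sub ((((hadd (ξ + δ + κ')).mul hsub).mul_const (L.sigma ξ)).mul_const (L.sigma κ'))
  have hderiv := hleft.unique (hright.congr_of_eventuallyEq (.of_forall fun κ => by
    have h := L.sigma_fay ξ δ κ κ'
    rw [add_right_comm ξ κ, add_comm κ κ', add_right_comm (ξ + δ) κ] at h
    exact h))
  have hσδ := L.sigma_ne_zero hδ
  have hσκ' := L.sigma_ne_zero hκ'
  have hσξ := L.sigma_ne_zero hξ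
  have hσsum := L.sigma_ne_zero hsum
  simp only [sigma_zero, add_zero, sub_zero] at hderiv
  rw [chi, zeta, zeta, zeta, zeta]
  field_simp
  linear_combination -hderiv

theorem exp_mul_Psi (ξ κ : ℂ) : Complex.exp (L.zeta ξ * κ) * L.Psi ξ κ = L.Phi ξ κ := by
  rw [Psi, mul_left_comm, ← Complex.exp_add, neg_mul, add_neg_cancel, Complex.exp_zero, mul_one]

theorem exp_neg_mul_Psi_neg (ξ κ : ℂ) :
    Complex.exp (-(L.zeta ξ) * κ) * L.Psi ξ (-κ) = L.Phi ξ (-κ) := by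
  rw [neg_mul_comm, exp_mul_Psi]

theorem Phi_ne_zero {ξ κ : ℂ} (hξ : ξ ∉ L.lattice) (hκ : κ ∉ L.lattice)
    (hadd : ξ + κ ∉ L.lattice) : L.Phi ξ κ ≠ 0 :=
  div_ne_zero (L.sigma_ne_zero hadd) (mul_ne_zero (L.sigma_ne_zero hξ) (L.sigma_ne_zero hκ))

theorem Phi_mul_inv_mul_Phi_add {ξ δ κ κ' : ℂ} (hξ : ξ ∉ L.lattice) (hδ : δ ∉ L.lattice)
    (hκ : κ ∉ L.lattice) (hκ' : κ' ∉ L.lattice) (hκκ' : κ + κ' ∉ L.lattice)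
    (hsum : ξ + δ + κ' ∉ L.lattice) (hχ : L.chi δ κ' ξ ≠ 0) :
    L.Phi δ (-κ) * (L.Phi δ κ')⁻¹ * L.Phi (ξ + δ) (κ + κ') =
      L.Phi ξ (κ + κ') - L.Phi ξ κ * L.Phi ξ κ' / L.chi δ κ' ξ := by
  have hchi := L.chi_mul_sigma hδ hκ' hξ hsum
  have hσξ := L.sigma_ne_zero hξ
  have hσδ := L.sigma_ne_zero hδ
  have hσκ := L.sigma_ne_zero hκ
  have hσκ' := L.sigma_ne_zero hκ'
  have hσκκ' := L.sigma_ne_zero hκκ'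
  have hσsum := L.sigma_ne_zero hsum
  have hden : L.sigma δ * L.sigma κ' * L.sigma ξ * L.sigma (ξ + δ + κ') ≠ 0 := by simp [*]
  have hprod : L.sigma (δ + κ') * L.sigma (ξ + κ') * L.sigma (ξ + δ) ≠ 0 := by
    rw [← hchi]
    exact mul_ne_zero hχ hden
  simp only [mul_ne_zero_iff] at hprod
  obtain ⟨⟨hδκ', hξκ'⟩, hξδ⟩ := hprod
  rw [eq_div_of_mul_eq hden hchi]
  simp only [Phi, sigma_neg, ← sub_eq_add_neg, ← add_assoc]
  field_simp
  linear_combination -L.sigma_fay ξ δ κ κ'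

end EllLattice

section RankOneUpdate

variable {m n R : Type*} [Fintype m] [DecidableEq m] [CommRing R]

theorem det_sub_vecMulVec {A : Matrix m m R} (hA : IsUnit A.det) (u v : m → R) :
    (A - vecMulVec u v).det = (1 - v ⬝ᵥ (A⁻¹ *ᵥ u)) * A.det := by
  rw [sub_eq_add_neg, ← neg_vecMulVec, vecMulVec_eq Unit,
    det_add_replicateCol_mul_replicateRow hA, ← replicateRow_vecMul, det_unique (n := Unit),
    Matrix.add_apply, Matrix.one_apply_eq, replicateRow_mul_replicateCol_apply, dotProduct_neg,
    ← dotProduct_mulVec, ← sub_eq_add_neg, mul_comm]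

theorem det_one_add_sub_vecMulVec_mul [Fintype n] {M : Matrix m n R} {C : Matrix n m R}
    (h : IsUnit (1 + M * C).det) (u : m → R) (v : n → R) :
    (1 + (M - vecMulVec u v) * C).det =
      (1 - v ⬝ᵥ (C *ᵥ ((1 + M * C)⁻¹ *ᵥ u))) * (1 + M * C).det := by
  rw [Matrix.sub_mul, vecMulVec_mul, add_sub, det_sub_vecMulVec h, dotProduct_mulVec v]

theorem inv_diagonal_of_ne_zero {K : Type*} [Field K] {x : m → K} (hx : ∀ i, x i ≠ 0) :
    (diagonal x)⁻¹ = diagonal fun i => (x i)⁻¹ := by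
  refine inv_eq_right_inv ?_
  rw [diagonal_mul_diagonal, funext fun i => mul_inv_cancel₀ (hx i), diagonal_one]

end RankOneUpdate

namespace KPData

variable {N N' P : ℕ} (D : KPData N N')

/-- The part of `ρ_i` left after removing `e^{ζ(ξ)κ_i}`; the exponentials in `Ψ` cancel against
those in `ρ_i`, so only the functions `Φ` remain. -/
def rowWeight (i : Fin N) (n m h : ℤ) : ℂ :=
  D.L.Phi D.del (-(D.κ i)) ^ n * D.L.Phi D.eps (-(D.κ i)) ^ m * D.L.Phi D.lam (-(D.κ i)) ^ h *
    D.ρ0 i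

/-- The part of `ν_j` left after removing `e^{ζ(ξ)κ′_j}`. -/
def colWeight (j : Fin N') (n m h : ℤ) : ℂ :=
  D.L.Phi D.del (D.κ' j) ^ (-n) * D.L.Phi D.eps (D.κ' j) ^ (-m) * D.L.Phi D.lam (D.κ' j) ^ (-h) *
    D.ν0 j

theorem ρ_eq_rowWeight_mul_exp (i : Fin N) (n m h : ℤ) :
    D.ρ i n m h = D.rowWeight i n m h * Complex.exp (D.L.zeta (D.xi n m h) * D.κ i) := by
  rw [ρ, rowWeight, D.L.exp_neg_mul_Psi_neg, D.L.exp_neg_mul_Psi_neg, D.L.exp_neg_mul_Psi_neg,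
    mul_right_comm]

theorem ν_eq_colWeight_mul_exp (j : Fin N') (n m h : ℤ) :
    D.ν j n m h = D.colWeight j n m h * Complex.exp (D.L.zeta (D.xi n m h) * D.κ' j) := by
  rw [ν, colWeight, D.L.exp_mul_Psi, D.L.exp_mul_Psi, D.L.exp_mul_Psi, mul_right_comm]

theorem r_apply (i : Fin N) (n m h : ℤ) :
    D.r n m h i = D.rowWeight i n m h * D.L.Phi (D.xi n m h) (D.κ i) := by
  rw [r, ρ_eq_rowWeight_mul_exp, mul_assoc, D.L.exp_mul_Psi]

theorem s_apply (j : Fin N') (n m h : ℤ) :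
    D.s n m h j = D.colWeight j n m h * D.L.Phi (D.xi n m h) (D.κ' j) := by
  rw [s, ν_eq_colWeight_mul_exp, mul_assoc, D.L.exp_mul_Psi]

theorem M_apply (i : Fin N) (j : Fin N') (n m h : ℤ) :
    D.M n m h i j = D.rowWeight i n m h * D.colWeight j n m h *
      D.L.Phi (D.xi n m h) (D.κ i + D.κ' j) := by
  rw [M, Matrix.of_apply, ρ_eq_rowWeight_mul_exp, ν_eq_colWeight_mul_exp, ← D.L.exp_mul_Psi,
    mul_add, Complex.exp_add]
  ring

/-- The point `z` stays off the lattice after adding any integer combination of the rapidity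
parameters; under `Generic` this holds for `δ`, `ε`, `λ` and every `ξ`. -/
def AvoidsRapidities (z : ℂ) : Prop :=
  ∀ (a : Fin N → ℤ) (b : Fin N' → ℤ),
    z + ∑ i, a i • D.κ i + ∑ j, b j • D.κ' j ∉ D.L.lattice

variable {D}

theorem AvoidsRapidities.notMem {z : ℂ} (hz : D.AvoidsRapidities z) : z ∉ D.L.lattice := by
  simpa using hz 0 0

theorem AvoidsRapidities.add_neg_κ_notMem {z : ℂ} (hz : D.AvoidsRapidities z) (i : Fin N) :
    z + -(D.κ i) ∉ D.L.lattice := by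
  simpa [Pi.single_apply] using hz (Pi.single i (-1)) 0

theorem AvoidsRapidities.add_κ'_notMem {z : ℂ} (hz : D.AvoidsRapidities z) (j : Fin N') :
    z + D.κ' j ∉ D.L.lattice := by
  simpa [Pi.single_apply] using hz 0 (Pi.single j 1)

variable {extra : Fin P → ℂ}

theorem Generic.rapidity_sum_notMem (hgen : D.Generic extra) {a : Fin N → ℤ} {b : Fin N' → ℤ}
    (hab : ¬(a = 0 ∧ b = 0)) : ∑ i, a i • D.κ i + ∑ j, b j • D.κ' j ∉ D.L.lattice := by
  have h := hgen 0 0 0 0 a b 0 (by tauto)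
  rw [D.L.mem_iff_mem_lattice] at h
  simpa using h

theorem Generic.κ_notMem (hgen : D.Generic extra) (i : Fin N) : D.κ i ∉ D.L.lattice := by
  simpa [Pi.single_apply] using hgen.rapidity_sum_notMem (a := Pi.single i 1) (b := 0) (by simp)

theorem Generic.κ'_notMem (hgen : D.Generic extra) (j : Fin N') : D.κ' j ∉ D.L.lattice := by
  simpa [Pi.single_apply] using hgen.rapidity_sum_notMem (a := 0) (b := Pi.single j 1) (by simp)

theorem Generic.κ_add_κ'_notMem (hgen : D.Generic extra) (i : Fin N) (j : Fin N') :
    D.κ i + D.κ' j ∉ D.L.lattice := by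
  simpa [Pi.single_apply] using
    hgen.rapidity_sum_notMem (a := Pi.single i 1) (b := Pi.single j 1) (by simp)

theorem Generic.avoidsRapidities (hgen : D.Generic extra) {c₀ cn cm ch : ℤ}
    (hc : ¬(c₀ = 0 ∧ cn = 0 ∧ cm = 0 ∧ ch = 0)) :
    D.AvoidsRapidities (c₀ • D.xi0 + cn • D.del + cm • D.eps + ch • D.lam) := by
  intro a b
  have h := hgen c₀ cn cm ch a b 0 (by tauto)
  rw [D.L.mem_iff_mem_lattice] at h
  simpa using h

theorem Generic.avoidsRapidities_del (hgen : D.Generic extra) : D.AvoidsRapidities D.del := by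
  simpa using hgen.avoidsRapidities (c₀ := 0) (cn := 1) (cm := 0) (ch := 0) (by simp)

theorem Generic.avoidsRapidities_eps (hgen : D.Generic extra) : D.AvoidsRapidities D.eps := by
  simpa using hgen.avoidsRapidities (c₀ := 0) (cn := 0) (cm := 1) (ch := 0) (by simp)

theorem Generic.avoidsRapidities_lam (hgen : D.Generic extra) : D.AvoidsRapidities D.lam := by
  simpa using hgen.avoidsRapidities (c₀ := 0) (cn := 0) (cm := 0) (ch := 1) (by simp)

theorem Generic.avoidsRapidities_xi (hgen : D.Generic extra) (n m h : ℤ) :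
    D.AvoidsRapidities (D.xi n m h) := by
  simpa [xi] using hgen.avoidsRapidities (c₀ := 1) (cn := n) (cm := m) (ch := h) (by simp)

theorem Generic.Phi_neg_κ_ne_zero (hgen : D.Generic extra) {β : ℂ} (hβ : D.AvoidsRapidities β)
    (i : Fin N) : D.L.Phi β (-(D.κ i)) ≠ 0 :=
  D.L.Phi_ne_zero hβ.notMem (mt neg_mem_iff.1 (hgen.κ_notMem i)) (hβ.add_neg_κ_notMem i)

theorem Generic.Phi_κ'_ne_zero (hgen : D.Generic extra) {β : ℂ} (hβ : D.AvoidsRapidities β)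
    (j : Fin N') : D.L.Phi β (D.κ' j) ≠ 0 :=
  D.L.Phi_ne_zero hβ.notMem (hgen.κ'_notMem j) (hβ.add_κ'_notMem j)

variable (D) in
/-- Passing from `(n, m, h)` to `(n', m', h')` is a lattice step with parameter `β`: it adds `β` to
`ξ` and multiplies the plane-wave weights by the values of `Φ_β`. It covers the three shifts of the
lattice KP system at once. -/
structure IsStep (β : ℂ) (n m h n' m' h' : ℤ) : Prop where
  xi_eq : D.xi n' m' h' = D.xi n m h + β
  rowWeight_eq (i : Fin N) :
    D.rowWeight i n' m' h' = D.rowWeight i n m h * D.L.Phi β (-(D.κ i))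
  colWeight_eq (j : Fin N') :
    D.colWeight j n' m' h' = D.colWeight j n m h * (D.L.Phi β (D.κ' j))⁻¹

theorem Generic.isStep_del (hgen : D.Generic extra) (n m h : ℤ) :
    D.IsStep D.del n m h (n + 1) m h where
  xi_eq := by simp only [xi, add_smul, one_smul]; ring
  rowWeight_eq i := by
    have hΦ := hgen.Phi_neg_κ_ne_zero hgen.avoidsRapidities_del i
    rw [rowWeight, rowWeight, zpow_add_one₀ hΦ]; ring
  colWeight_eq j := by
    have hΦ := hgen.Phi_κ'_ne_zero hgen.avoidsRapidities_del j
    rw [colWeight, colWeight, neg_add', zpow_sub_one₀ hΦ]; ring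

theorem Generic.isStep_eps (hgen : D.Generic extra) (n m h : ℤ) :
    D.IsStep D.eps n m h n (m + 1) h where
  xi_eq := by simp only [xi, add_smul, one_smul]; ring
  rowWeight_eq i := by
    have hΦ := hgen.Phi_neg_κ_ne_zero hgen.avoidsRapidities_eps i
    rw [rowWeight, rowWeight, zpow_add_one₀ hΦ]; ring
  colWeight_eq j := by
    have hΦ := hgen.Phi_κ'_ne_zero hgen.avoidsRapidities_eps j
    rw [colWeight, colWeight, neg_add', zpow_sub_one₀ hΦ]; ring

theorem Generic.isStep_lam (hgen : D.Generic extra) (n m h : ℤ) :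
    D.IsStep D.lam n m h n m (h + 1) where
  xi_eq := by simp only [xi, add_smul, one_smul]; ring
  rowWeight_eq i := by
    have hΦ := hgen.Phi_neg_κ_ne_zero hgen.avoidsRapidities_lam i
    rw [rowWeight, rowWeight, zpow_add_one₀ hΦ]; ring
  colWeight_eq j := by
    have hΦ := hgen.Phi_κ'_ne_zero hgen.avoidsRapidities_lam j
    rw [colWeight, colWeight, neg_add', zpow_sub_one₀ hΦ]; ring

theorem IsStep.M_eq {β : ℂ} {n m h n' m' h' : ℤ} (hstep : D.IsStep β n m h n' m' h')
    (hgen : D.Generic extra) (hβ : D.AvoidsRapidities β)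
    (hχ : ∀ j, D.L.chi β (D.κ' j) (D.xi n m h) ≠ 0) :
    D.M n' m' h' = D.M n m h - vecMulVec (D.r n m h) (D.s n m h ᵥ* (D.DK' β n m h)⁻¹) := by
  ext i j
  have hξβ : D.xi n m h + β + D.κ' j ∉ D.L.lattice :=
    hstep.xi_eq ▸ (hgen.avoidsRapidities_xi n' m' h').add_κ'_notMem j
  have hΦ := D.L.Phi_mul_inv_mul_Phi_add (hgen.avoidsRapidities_xi n m h).notMem hβ.notMem
    (hgen.κ_notMem i) (hgen.κ'_notMem j) (hgen.κ_add_κ'_notMem i j) hξβ (hχ j)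
  rw [Matrix.sub_apply, vecMulVec_apply, DK', inv_diagonal_of_ne_zero hχ, vecMul_diagonal,
    M_apply, M_apply, r_apply, s_apply, hstep.xi_eq, hstep.rowWeight_eq, hstep.colWeight_eq]
  linear_combination (D.rowWeight i n m h * D.colWeight j n m h) * hΦ

theorem IsStep.τ_eq {β : ℂ} {n m h n' m' h' : ℤ} (hstep : D.IsStep β n m h n' m' h')
    (hgen : D.Generic extra) (hβ : D.AvoidsRapidities β)
    (hχ : ∀ j, D.L.chi β (D.κ' j) (D.xi n m h) ≠ 0) (hM : IsUnit (1 + D.M n m h * D.C).det) :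
    D.τ n' m' h' = D.W β n m h * D.τ n m h := by
  rw [τ, τ, W, hstep.M_eq hgen hβ hχ, det_one_add_sub_vecMulVec_mul hM,
    ← dotProduct_mulVec (D.s n m h)]

end KPData

/-- The τ-function obeys `τ̃ = W_δ τ`, `τ̂ = W_ε τ`, `τ̄ = W_λ τ`. -/
theorem tau_shift_relations {N N' : ℕ} (D : KPData N N')
    (hρ0 : ∀ i, D.ρ0 i ≠ 0) (hν0 : ∀ j, D.ν0 j ≠ 0)
    (hgen : D.Generic ![])
    (hInv : ∀ n m h : ℤ, IsUnit ((1 + D.M n m h * D.C).det))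
    (hχδ : ∀ (n m h : ℤ) (j : Fin N'), D.L.chi D.del (D.κ' j) (D.xi n m h) ≠ 0)
    (hχε : ∀ (n m h : ℤ) (j : Fin N'), D.L.chi D.eps (D.κ' j) (D.xi n m h) ≠ 0)
    (hχl : ∀ (n m h : ℤ) (j : Fin N'), D.L.chi D.lam (D.κ' j) (D.xi n m h) ≠ 0) :
    ∀ n m h : ℤ,
      D.τ (n + 1) m h = D.W D.del n m h * D.τ n m h ∧
      D.τ n (m + 1) h = D.W D.eps n m h * D.τ n m h ∧
      D.τ n m (h + 1) = D.W D.lam n m h * D.τ n m h :=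
  fun n m h => ⟨
    (hgen.isStep_del n m h).τ_eq hgen hgen.avoidsRapidities_del (hχδ n m h) (hInv n m h),
    (hgen.isStep_eps n m h).τ_eq hgen hgen.avoidsRapidities_eps (hχε n m h) (hInv n m h),
    (hgen.isStep_lam n m h).τ_eq hgen hgen.avoidsRapidities_lam (hχl n m h) (hInv n m h)⟩
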